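/- For any prime p > 10, the sum of 1/(l_1⋯l_{10}) over all 10-tuples of positive integers with l_1+⋯+l_{10} = 2p and each l_i coprime to p is congruent modulo p to (10!/1050)·(50·B_{p-3}·B_{p-7} + 21·B_{p-5}²). -/

import Mathlib

/-- `x ≡ y (mod p^r)` as p-integral rationals. -/
def ratCong (p r : ℕ) (x y : ℚ) : Prop :=
  ∃ z : ℚ, x - y = (p : ℚ) ^ r * z ∧ ¬ (p ∣ z.den)

/-- Sum of `1/(l₁⋯lₙ)` over positive `n`-tuples summing to `N` with each `lᵢ` coprime to `p`. -/
def hsum (p n N : ℕ) : ℚ :=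
  ∑ l ∈ (Fintype.piFinset fun _ : Fin n => Finset.Icc 1 N) |>.filter
      (fun l => ∑ i, l i = N ∧ ∀ i, ¬ p ∣ l i),
    ∏ i, (1 : ℚ) / l i

/-!
The sum is the coefficient of `X^(2p)` in a power of `-log (1 - X)` stripped of its terms `X^k / k`
with `p ∣ k`; in degree `2p` these terms contribute only through `X^p / p`, once. Powers of the
logarithm expand in Stirling numbers, that is, in the coefficients of `x(x+1)⋯(x+2p-1)` and
`x(x+1)⋯(x+p-1)`. Writing `f = (X+1)⋯(X+p-1)`, the longer product recentred at `-p` becomes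
`(X² - pX) f(X) f(-X)` with `f(X) f(-X)` even, so modulo `p³` what survives is a convolution of the
coefficients of `f`. Finally `p B_{p-2-j} / (j+2)` is congruent to the coefficient of `X^(j+1)` in
`f` modulo `p²`: the forward differences of `x(x+1)⋯(x+p-1)` and of the Bernoulli polynomial
`B_p(x)` are `p f(x)` and `p x^(p-1)`, which agree modulo `p²` up to a constant since
`f ≡ X^(p-1) - 1` modulo `p`, and a polynomial of degree less than `p` is recovered from its
forward difference by dividing by integers prime to `p`.
-/

section ReciprocalSeries

open PowerSeries

/-- The generating function `∑_{n ∈ s} Xⁿ / n`, where the term `n = 0` is `0` by Lean's convention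
for division. Its powers generate sums of `1 / (l₁⋯lₙ)` over tuples in `s`; for `s = univ` it is
`-log (1 - X)`. -/
noncomputable def reciprocalSeries (s : Set ℕ) : ℚ⟦X⟧ :=
  mk (s.indicator fun n ↦ 1 / (n : ℚ))

lemma reciprocalSeries_add_compl (s : Set ℕ) :
    reciprocalSeries s + reciprocalSeries sᶜ = reciprocalSeries Set.univ := by
  ext k
  simp only [reciprocalSeries, map_add, coeff_mk, Set.indicator_self_add_compl_apply,
    Set.indicator_univ]

lemma hsum_eq_coeff_reciprocalSeries_pow (p n N : ℕ) :
    hsum p n N = coeff N (reciprocalSeries {k | p ∣ k}ᶜ ^ n) := by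
  rw [← Fin.prod_const n, coeff_prod, hsum]
  refine Finset.sum_of_injOn Finsupp.equivFunOnFinite.symm
    Finsupp.equivFunOnFinite.symm.injective.injOn ?_ ?_ ?_
  · intro l hl
    obtain ⟨-, hl_sum, -⟩ := Finset.mem_filter.mp hl
    simpa [Finset.mem_finsuppAntidiag] using hl_sum
  · intro l hl hnot
    by_contra hne
    have hdvd (i : Fin n) : ¬ p ∣ l i := fun h ↦
      hne (Finset.prod_eq_zero (Finset.mem_univ i) (by simp [reciprocalSeries, h]))
    have hl_sum : ∑ i, l i = N := (Finset.mem_finsuppAntidiag.mp hl).1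
    refine hnot ⟨l, Finset.mem_filter.mpr ⟨Fintype.mem_piFinset.mpr fun i ↦ ?_, hl_sum, hdvd⟩,
      by simp⟩
    exact Finset.mem_Icc.mpr ⟨Nat.pos_of_ne_zero fun h ↦ hdvd i (h ▸ dvd_zero p),
      hl_sum ▸ Finset.single_le_sum (fun _ _ ↦ Nat.zero_le _) (Finset.mem_univ i)⟩
  · intro l hl
    obtain ⟨-, -, hdvd⟩ := Finset.mem_filter.mp hl
    exact Finset.prod_congr rfl fun i _ ↦ by simp [reciprocalSeries, hdvd i]

lemma derivative_reciprocalSeries_univ :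
    derivative ℚ (reciprocalSeries Set.univ) = mk 1 := by
  ext k
  simp only [coeff_derivative, reciprocalSeries, Set.indicator_univ, coeff_mk, Pi.one_apply]
  push_cast
  field_simp

lemma succ_mul_coeff_succ_reciprocalSeries_univ_pow_succ (n N : ℕ) :
    ((N : ℚ) + 1) * coeff (N + 1) (reciprocalSeries Set.univ ^ (n + 1)) =
      N * coeff N (reciprocalSeries Set.univ ^ (n + 1)) +
        (n + 1) * coeff N (reciprocalSeries Set.univ ^ n) := by
  set L := reciprocalSeries Set.univ
  have hODE : (1 - X) * derivative ℚ (L ^ (n + 1)) = (n + 1 : ℚ) • L ^ n := by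
    rw [derivative_pow, derivative_reciprocalSeries_univ, Nat.add_sub_cancel]
    calc (1 - X) * (((n + 1 : ℕ) : ℚ⟦X⟧) * L ^ n * mk 1)
        = (mk 1 * (1 - X)) * (((n + 1 : ℕ) : ℚ⟦X⟧) * L ^ n) := by ring
      _ = (n + 1 : ℚ) • L ^ n := by
          rw [mk_one_mul_one_sub_eq_one, one_mul, ← nsmul_eq_mul, ← Nat.cast_smul_eq_nsmul ℚ]
          push_cast
          rfl
  have hcoeff := congrArg (coeff N) hODE
  rw [coeff_smul, smul_eq_mul, sub_mul, one_mul, map_sub, coeff_derivative] at hcoeff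
  rcases N with _ | N
  · simp only [coeff_zero_X_mul] at hcoeff
    push_cast at hcoeff ⊢
    linarith
  · rw [coeff_succ_X_mul, coeff_derivative] at hcoeff
    push_cast at hcoeff ⊢
    linarith

lemma factorial_mul_coeff_reciprocalSeries_univ_pow (N n : ℕ) :
    (N.factorial : ℚ) * coeff N (reciprocalSeries Set.univ ^ n) =
      n.factorial * (ascPochhammer ℚ N).coeff n := by
  induction N generalizing n with
  | zero => cases n <;> simp [Polynomial.coeff_one, reciprocalSeries]
  | succ N ih =>
    rcases n with _ | n
    · simp [coeff_one, ascPochhammer_succ_left]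
    · have hrec := succ_mul_coeff_succ_reciprocalSeries_univ_pow_succ n N
      have ih₁ := ih (n + 1)
      rw [ascPochhammer_succ_right, mul_add, Polynomial.coeff_add, Polynomial.coeff_mul_X,
        ← Polynomial.C_eq_natCast, Polynomial.coeff_mul_C]
      simp only [Nat.factorial_succ, Nat.cast_mul, Nat.cast_succ] at ih₁ ⊢
      linear_combination (N.factorial : ℚ) * hrec + N * ih₁ + (n + 1) * ih n

lemma mul_sq_dvd_add_pow_sub {R : Type*} [CommRing R] {x y t : R} (hx : t ∣ x) (hy : t ∣ y)
    (m : ℕ) : t * y ^ 2 ∣ (x + y) ^ (m + 3) - x ^ (m + 3) - (m + 3) * x ^ (m + 2) * y := by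
  obtain ⟨k, hk⟩ := Polynomial.powAddExpansion x y (m + 2)
  have hfactor : (x + y) ^ (m + 3) - x ^ (m + 3) - (m + 3) * x ^ (m + 2) * y =
      ((m + 2) * x ^ (m + 1) + k * (x + y)) * y ^ 2 := by
    rw [pow_succ (x + y), hk]
    push_cast
    ring
  rw [hfactor]
  exact mul_dvd_mul_right (dvd_add ((dvd_pow hx m.succ_ne_zero).mul_left _)
    ((dvd_add hx hy).mul_left k)) _

lemma coeff_two_mul_mul_reciprocalSeries_dvd {p : ℕ} (hp : 0 < p) {g : ℚ⟦X⟧}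
    (hg : constantCoeff g = 0) :
    coeff (2 * p) (g * reciprocalSeries {k | p ∣ k}) = coeff p g / p := by
  rw [coeff_mul, Finset.sum_eq_single (p, p)]
  · simp [reciprocalSeries, div_eq_mul_inv]
  · rintro ⟨a, b⟩ hab hne
    rw [Finset.HasAntidiagonal.mem_antidiagonal] at hab
    by_cases hdvd : p ∣ b
    · obtain ⟨c, rfl⟩ := hdvd
      obtain _ | _ | _ | c := c
      · simp [reciprocalSeries]
      · exact absurd (Prod.ext (by grind) (by grind)) hne
      · obtain rfl : a = 0 := by grind
        simp [hg]
      · nlinarith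
    · simp [reciprocalSeries, hdvd]
  · intro h
    exact absurd (Finset.HasAntidiagonal.mem_antidiagonal.mpr (two_mul p).symm) h

lemma hsum_two_mul_eq_coeff_sub {p : ℕ} (hp : 0 < p) (m : ℕ) :
    hsum p (m + 3) (2 * p) = coeff (2 * p) (reciprocalSeries Set.univ ^ (m + 3)) -
      (m + 3) / p * coeff p (reciprocalSeries Set.univ ^ (m + 2)) := by
  set L := reciprocalSeries Set.univ with hL
  set M := reciprocalSeries {k | p ∣ k}
  have hX_dvd_L : X ∣ L := by simp [X_dvd_iff, L, reciprocalSeries]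
  have hX_pow_dvd_M : X ^ p ∣ M := by
    refine X_pow_dvd_iff.mpr fun k hk ↦ ?_
    rcases k.eq_zero_or_pos with rfl | hk₀
    · simp [M, reciprocalSeries]
    · simp [M, reciprocalSeries, Nat.not_dvd_of_pos_of_lt hk₀ hk]
  obtain ⟨R, hR⟩ := mul_sq_dvd_add_pow_sub hX_dvd_L
    (((dvd_pow_self X hp.ne').trans hX_pow_dvd_M).neg_right) m
  have hR_coeff : coeff (2 * p) (X * (-M) ^ 2 * R) = 0 := by
    refine X_pow_dvd_iff.mp (Dvd.dvd.mul_right ?_ R) (2 * p) (Nat.lt_succ_self _)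
    rw [neg_sq, pow_succ', mul_comm 2 p, pow_mul]
    exact mul_dvd_mul_left X (pow_dvd_pow_of_dvd hX_pow_dvd_M 2)
  have hexpand : (L - M) ^ (m + 3) =
      L ^ (m + 3) - (m + 3 : ℚ) • (L ^ (m + 2) * M) + X * (-M) ^ 2 * R := by
    rw [← hR, ← sub_eq_add_neg, smul_eq_C_mul, map_add, map_natCast, map_ofNat]
    ring
  rw [hsum_eq_coeff_reciprocalSeries_pow, ← add_sub_cancel_left M (reciprocalSeries _),
    reciprocalSeries_add_compl, ← hL, hexpand, map_add, hR_coeff, map_sub, coeff_smul,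
    coeff_two_mul_mul_reciprocalSeries_dvd hp (by simp [L, reciprocalSeries]), smul_eq_mul]
  ring

end ReciprocalSeries

section RisingProduct

open Polynomial

lemma coeff_comp_neg_X {R : Type*} [CommRing R] (P : R[X]) (n : ℕ) :
    (P.comp (-X)).coeff n = P.coeff n * (-1) ^ n := by
  rw [← comp_C_mul_X_coeff, map_neg, map_one, neg_one_mul]

lemma coeff_mul_comp_neg_X_of_odd {R : Type*} [CommRing R] [NoZeroDivisors R] [CharZero R]
    (P : R[X]) {n : ℕ} (hn : Odd n) :
    (P * P.comp (-X)).coeff n = 0 := by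
  have heven : (P * P.comp (-X)).comp (-X) = P * P.comp (-X) := by
    rw [mul_comp, comp_neg_X_comp_neg_X, mul_comm]
  have hcoeff := coeff_comp_neg_X (P * P.comp (-X)) n
  rw [heven, hn.neg_one_pow, mul_neg_one] at hcoeff
  exact self_eq_neg.mp hcoeff

lemma coeff_mul_comp_neg_X_of_even {R : Type*} [CommRing R] (P : R[X]) {w : ℕ} (hw : Even w) :
    (P * P.comp (-X)).coeff (w + 2) = 2 * P.coeff 0 * P.coeff (w + 2) -
      ∑ ij ∈ Finset.HasAntidiagonal.antidiagonal w,
        (-1) ^ ij.2 * P.coeff (ij.1 + 1) * P.coeff (ij.2 + 1) := by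
  rw [coeff_mul, Finset.Nat.sum_antidiagonal_succ, Finset.Nat.sum_antidiagonal_succ']
  have hinner : ∑ ij ∈ Finset.HasAntidiagonal.antidiagonal w,
      P.coeff (ij.1 + 1) * (P.comp (-X)).coeff (ij.2 + 1) =
      -∑ ij ∈ Finset.HasAntidiagonal.antidiagonal w,
        (-1) ^ ij.2 * P.coeff (ij.1 + 1) * P.coeff (ij.2 + 1) := by
    rw [← Finset.sum_neg_distrib]
    exact Finset.sum_congr rfl fun ij _ ↦ by rw [coeff_comp_neg_X]; ring
  rw [hinner, coeff_comp_neg_X, coeff_comp_neg_X]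
  simp only [pow_succ, pow_zero, hw.neg_one_pow]
  ring

/-- The polynomial `(X + 1)(X + 2)⋯(X + n)`, whose coefficient of `X ^ k` is the unsigned Stirling
number of the first kind `[n + 1, k + 1]`. -/
noncomputable def risingProduct (n : ℕ) : ℤ[X] :=
  (ascPochhammer ℤ n).comp (X + 1)

lemma X_mul_risingProduct (n : ℕ) : X * risingProduct n = ascPochhammer ℤ (n + 1) :=
  (ascPochhammer_succ_left ℤ n).symm

lemma coeff_risingProduct_pred {n : ℕ} (hn : 0 < n) (k : ℕ) :
    (risingProduct (n - 1)).coeff k = (ascPochhammer ℤ n).coeff (k + 1) := by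
  rw [← coeff_X_mul, X_mul_risingProduct, Nat.sub_add_cancel hn]

lemma risingProduct_eval_natCast (n k : ℕ) :
    (risingProduct n).eval (k : ℤ) = (k + 1).ascFactorial n := by
  rw [risingProduct, eval_comp, ← ascPochhammer_nat_eq_ascFactorial, ascPochhammer_eval_cast]
  simp

lemma risingProduct_coeff_zero (n : ℕ) : (risingProduct n).coeff 0 = n.factorial := by
  rw [coeff_zero_eq_eval_zero, ← Nat.cast_zero, risingProduct_eval_natCast,
    Nat.zero_add, Nat.one_ascFactorial]

lemma risingProduct_comp_X_sub (n : ℕ) :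
    (risingProduct n).comp (X - (n + 1 : ℤ[X])) = (-1) ^ n * (risingProduct n).comp (-X) := by
  refine Polynomial.funext fun r ↦ ?_
  have hreflect := ascPochhammer_eval_neg_eq_descPochhammer ℤ (r - 1) n
  rw [descPochhammer_eval_eq_ascPochhammer] at hreflect
  simp only [risingProduct, eval_comp, eval_add, eval_neg, eval_X, eval_one, eval_mul, eval_pow,
    eval_sub, eval_natCast]
  rw [show -r + 1 = -(r - 1) by ring, hreflect, ← mul_assoc, ← mul_pow, neg_one_mul, neg_neg,
    one_pow, one_mul]
  ring_nf

-- Centring the product at its midpoint `-p` exposes the even polynomial `f(X) f(-X)`.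
lemma ascPochhammer_two_mul_eq_taylor {p : ℕ} (hp : Odd p) :
    ascPochhammer ℤ (2 * p) = taylor (p : ℤ) ((X ^ 2 - (p : ℤ[X]) * X) *
      (risingProduct (p - 1) * (risingProduct (p - 1)).comp (-X))) := by
  obtain ⟨k, rfl⟩ := hp
  have hreflect := risingProduct_comp_X_sub (2 * k)
  rw [(even_two_mul k).neg_one_pow, one_mul] at hreflect
  rw [Nat.add_sub_cancel, ← hreflect, two_mul (2 * k + 1), ← ascPochhammer_mul,
    ← X_mul_risingProduct]
  simp [taylor_apply, mul_comp, comp_assoc]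
  ring

end RisingProduct

section CoeffModPrime

open Polynomial

lemma pow_dvd_eval_sub_sum_coeff {R : Type*} [CommRing R] (c : R) (P : R[X]) (r : ℕ) :
    c ^ r ∣ P.eval c - ∑ i ∈ Finset.range r, P.coeff i * c ^ i := by
  rw [eval_eq_sum_range' (show P.natDegree < r + (P.natDegree + 1) by lia) c,
    Finset.sum_range_add, add_sub_cancel_left]
  exact Finset.dvd_sum fun i _ ↦ (pow_add c r i ▸ dvd_mul_right _ _).mul_left _

lemma pow_dvd_coeff_taylor_sub_sum_coeff {R : Type*} [CommRing R] (c : R) (P : R[X]) (k r : ℕ) :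
    c ^ r ∣ (taylor c P).coeff k -
      ∑ i ∈ Finset.range r, (i + k).choose k * P.coeff (i + k) * c ^ i := by
  simpa only [taylor_coeff, hasseDeriv_coeff] using
    pow_dvd_eval_sub_sum_coeff c (hasseDeriv k P) r

lemma pow_three_dvd_coeff_taylor_sub {R : Type*} [CommRing R] (c : R) {E : R[X]}
    (hE : ∀ n, Odd n → E.coeff n = 0) {n : ℕ} (hn : Even n) :
    c ^ 3 ∣ (taylor c ((X ^ 2 - C c * X) * E)).coeff (n + 2) -
      (E.coeff n + c ^ 2 * ((n + 3).choose 2 * E.coeff (n + 2))) := by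
  set H := (X ^ 2 - C c * X) * E with hH
  have hH_coeff (k : ℕ) : H.coeff (k + 2) = E.coeff k - c * E.coeff (k + 1) := by
    rw [hH, sub_mul, coeff_sub, coeff_X_pow_mul, mul_assoc, coeff_C_mul, coeff_X_mul]
  have h₀ : H.coeff (n + 2) = E.coeff n := by
    rw [hH_coeff, hE _ hn.add_one, mul_zero, sub_zero]
  have h₁ : H.coeff (1 + (n + 2)) = -(c * E.coeff (n + 2)) := by
    rw [← add_assoc, hH_coeff, add_comm, hE _ hn.add_one, zero_sub]
  have h₂ : H.coeff (2 + (n + 2)) = E.coeff (n + 2) := by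
    rw [add_comm, hH_coeff, hE _ (hn.add even_two).add_one, mul_zero, sub_zero]
  have hchoose₁ : (1 + (n + 2)).choose (n + 2) = n + 3 := by
    rw [← Nat.choose_symm_add, Nat.choose_one_right, add_comm]
  have hchoose₂ : (2 + (n + 2)).choose (n + 2) = n + 3 + (n + 3).choose 2 := by
    rw [← Nat.choose_symm_add, add_comm, Nat.choose_succ_succ' (n + 3) 1, Nat.choose_one_right]
  convert pow_dvd_coeff_taylor_sub_sum_coeff c H (n + 2) 3 using 2
  simp only [Finset.sum_range_succ, Finset.sum_range_zero, zero_add, hchoose₁, hchoose₂,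
    Nat.choose_self, h₀, h₁, h₂]
  push_cast
  ring

variable {p : ℕ} [hp : Fact p.Prime]

lemma ascPochhammer_zmod_card : ascPochhammer (ZMod p) p = X ^ p - X := by
  have hmonic := monic_ascPochhammer (ZMod p) p
  have hdeg : (ascPochhammer (ZMod p) p).degree = p := by
    rw [degree_eq_natDegree hmonic.ne_zero, ascPochhammer_natDegree]
  have hmonic' : (X ^ p - X : (ZMod p)[X]).Monic :=
    monic_X_pow_sub (by rw [degree_X]; exact_mod_cast hp.out.one_lt)
  have hdeg' : (X ^ p - X : (ZMod p)[X]).degree = p := by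
    rw [degree_eq_natDegree hmonic'.ne_zero,
      FiniteField.X_pow_card_sub_X_natDegree_eq _ hp.out.one_lt]
  refine eq_of_degree_sub_lt_of_eval_finset_eq Finset.univ ?_ fun x _ ↦ ?_
  · rw [Finset.card_univ, ZMod.card, ← hdeg]
    exact degree_sub_lt_left (hdeg.trans hdeg'.symm) hmonic.ne_zero
      (hmonic.leadingCoeff.trans hmonic'.leadingCoeff.symm)
  · rw [eval_sub, eval_pow, eval_X, ZMod.pow_card, sub_self, ← neg_neg x,
      ← ZMod.natCast_zmod_val (-x)]
    exact ascPochhammer_eval_neg_coe_nat_of_lt (ZMod.val_lt _)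

lemma map_risingProduct_zmod :
    (risingProduct (p - 1)).map (Int.castRingHom (ZMod p)) = X ^ (p - 1) - 1 := by
  have h := congrArg (map (Int.castRingHom (ZMod p))) (X_mul_risingProduct (p - 1))
  rw [Nat.sub_add_cancel hp.out.one_le, ascPochhammer_map, ascPochhammer_zmod_card,
    Polynomial.map_mul, map_X] at h
  refine mul_left_cancel₀ (X_ne_zero (R := ZMod p)) (h.trans ?_)
  rw [mul_sub, mul_one, ← pow_succ', Nat.sub_add_cancel hp.out.one_le]

lemma prime_dvd_coeff_risingProduct_sub (k : ℕ) :
    (p : ℤ) ∣ (risingProduct (p - 1) - (X ^ (p - 1) - 1)).coeff k := by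
  rw [← ZMod.intCast_zmod_eq_zero_iff_dvd, ← eq_intCast (Int.castRingHom (ZMod p)), ← coeff_map]
  simp [map_risingProduct_zmod]

lemma prime_dvd_coeff_risingProduct {k : ℕ} (hk : 0 < k) (hkp : k < p - 1) :
    (p : ℤ) ∣ (risingProduct (p - 1)).coeff k := by
  simpa [coeff_X_pow, coeff_one, hk.ne', hkp.ne] using prime_dvd_coeff_risingProduct_sub (p := p) k

lemma prime_dvd_coeff_risingProduct_mul_comp_neg_X {k : ℕ} (hk : 0 < k) (hkp : k < p - 1) :
    (p : ℤ) ∣ (risingProduct (p - 1) * (risingProduct (p - 1)).comp (-X)).coeff k := by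
  rw [coeff_mul]
  refine Finset.dvd_sum fun ij hij ↦ ?_
  have hij_sum := Finset.HasAntidiagonal.mem_antidiagonal.mp hij
  rcases ij.1.eq_zero_or_pos with h | h
  · rw [coeff_comp_neg_X]
    exact ((prime_dvd_coeff_risingProduct (by lia) (by lia)).mul_right _).mul_left _
  · exact (prime_dvd_coeff_risingProduct h (by lia)).mul_right _

lemma coeff_ascPochhammer_two_mul_modEq {w : ℕ} (hw : Even w) (hwp : w + 4 < p) :
    (ascPochhammer ℤ (2 * p)).coeff (w + 4) ≡
      (risingProduct (p - 1) * (risingProduct (p - 1)).comp (-X)).coeff (w + 2)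
        [ZMOD (p : ℤ) ^ 3] := by
  have htaylor := pow_three_dvd_coeff_taylor_sub (p : ℤ)
    (fun n ↦ coeff_mul_comp_neg_X_of_odd (risingProduct (p - 1))) (hw.add even_two)
  rw [C_eq_natCast, ← ascPochhammer_two_mul_eq_taylor (hp.out.odd_of_ne_two (by lia))] at htaylor
  set E := risingProduct (p - 1) * (risingProduct (p - 1)).comp (-X)
  have hdvd : (p : ℤ) ∣ ((w + 5).choose 2 : ℕ) * E.coeff (w + 4) := by
    rcases (show w + 5 ≤ p from hwp).eq_or_lt with h | h
    · rw [h]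
      exact (Int.natCast_dvd_natCast.mpr
        (hp.out.dvd_choose_self two_ne_zero (by lia))).mul_right _
    · exact (prime_dvd_coeff_risingProduct_mul_comp_neg_X (by lia) (by lia)).mul_left _
  have h := htaylor.add (pow_succ (p : ℤ) 2 ▸ mul_dvd_mul_left ((p : ℤ) ^ 2) hdvd)
  rw [← sub_sub, sub_add_cancel] at h
  exact (Int.modEq_iff_dvd.mpr h).symm

lemma eval_risingProduct_modEq (hp3 : 3 ≤ p) :
    (risingProduct (p - 1)).eval (p : ℤ) ≡ (risingProduct (p - 1)).coeff 0 [ZMOD (p : ℤ) ^ 2] := by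
  have hcoeff_one := prime_dvd_coeff_risingProduct (p := p) one_pos (by lia)
  have heval := pow_dvd_eval_sub_sum_coeff (p : ℤ) (risingProduct (p - 1)) 2
  rw [Finset.sum_range_succ, Finset.sum_range_one, pow_zero, mul_one, pow_one, ← sub_sub] at heval
  refine (Int.modEq_iff_dvd.mpr ?_).symm
  rw [← dvd_sub_left (sq (p : ℤ) ▸ mul_dvd_mul_right hcoeff_one _)]
  exact heval

lemma coeff_ascPochhammer_two_mul_sub_modEq {w : ℕ} (hw : Even w) (hwp : w + 4 < p) :
    (ascPochhammer ℤ (2 * p)).coeff (w + 4) -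
        2 * (risingProduct (p - 1)).eval (p : ℤ) * (risingProduct (p - 1)).coeff (w + 2) ≡
      -∑ ij ∈ Finset.HasAntidiagonal.antidiagonal w, (-1) ^ ij.2 *
        (risingProduct (p - 1)).coeff (ij.1 + 1) * (risingProduct (p - 1)).coeff (ij.2 + 1)
        [ZMOD (p : ℤ) ^ 3] := by
  have hcoeff := prime_dvd_coeff_risingProduct (p := p) (k := w + 2) (by lia) (by lia)
  have heval := (eval_risingProduct_modEq (p := p) (by lia)).symm.dvd
  have hprod : (p : ℤ) ^ 3 ∣ ((risingProduct (p - 1)).eval (p : ℤ) -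
      (risingProduct (p - 1)).coeff 0) * (2 * (risingProduct (p - 1)).coeff (w + 2)) :=
    pow_succ (p : ℤ) 2 ▸ mul_dvd_mul heval (hcoeff.mul_left 2)
  have hmain := (coeff_ascPochhammer_two_mul_modEq hw hwp).sub (Int.modEq_zero_iff_dvd.mpr hprod)
  rw [coeff_mul_comp_neg_X_of_even _ hw] at hmain
  convert hmain.sub_right
    (2 * (risingProduct (p - 1)).coeff 0 * (risingProduct (p - 1)).coeff (w + 2)) using 1 <;> ring

end CoeffModPrime

section RatCong

variable {p : ℕ} [hp : Fact p.Prime] {r s : ℕ} {x y z c : ℚ}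

lemma padicValuation_natCast_le_one (n : ℕ) : Rat.padicValuation p n ≤ 1 := by
  rw [← Int.cast_natCast, Rat.padicValuation_cast]
  exact Int.padicValuation_le_one p n

lemma padicValuation_natCast_eq_one {n : ℕ} (hn : 0 < n) (hnp : n < p) :
    Rat.padicValuation p n = 1 := by
  rw [← Int.cast_natCast, Rat.padicValuation_cast, Int.padicValuation_eq_one_iff,
    Int.natCast_dvd_natCast]
  exact Nat.not_dvd_of_pos_of_lt hn hnp

lemma ratCong_iff_padicValuation_le :
    ratCong p r x y ↔ Rat.padicValuation p (x - y) ≤ Rat.padicValuation p p ^ r := by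
  have hp₀ : (p : ℚ) ^ r ≠ 0 := pow_ne_zero r (Nat.cast_ne_zero.mpr hp.out.ne_zero)
  have hv₀ : 0 < Rat.padicValuation p ((p : ℚ) ^ r) :=
    zero_lt_iff.mpr ((Rat.padicValuation p).ne_zero_iff.mpr hp₀)
  rw [← map_pow]
  constructor
  · rintro ⟨z, hz, hden⟩
    rw [hz, map_mul]
    exact mul_le_of_le_one_right' (Rat.padicValuation_le_one_iff.mpr hden)
  · intro h
    refine ⟨(x - y) / (p : ℚ) ^ r, (mul_div_cancel₀ _ hp₀).symm, ?_⟩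
    rw [← Rat.padicValuation_le_one_iff, map_div₀]
    exact (div_le_one₀ hv₀).mpr h

namespace ratCong

lemma of_eq (h : x = y) : ratCong p r x y := by
  rw [ratCong_iff_padicValuation_le, h, sub_self, map_zero]
  exact zero_le

lemma symm (h : ratCong p r x y) : ratCong p r y x := by
  rw [ratCong_iff_padicValuation_le] at *
  rwa [Valuation.map_sub_swap]

lemma trans (hxy : ratCong p r x y) (hyz : ratCong p r y z) : ratCong p r x z := by
  rw [ratCong_iff_padicValuation_le] at *
  rw [← sub_add_sub_cancel x y z]
  exact Valuation.map_add_le _ hxy hyz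

lemma sum {ι : Type*} {t : Finset ι} {f g : ι → ℚ} (h : ∀ i ∈ t, ratCong p r (f i) (g i)) :
    ratCong p r (∑ i ∈ t, f i) (∑ i ∈ t, g i) := by
  simp only [ratCong_iff_padicValuation_le] at *
  rw [← Finset.sum_sub_distrib]
  exact Valuation.map_sum_le _ h

lemma mul_left (hc : Rat.padicValuation p c ≤ 1) (h : ratCong p r x y) :
    ratCong p r (c * x) (c * y) := by
  rw [ratCong_iff_padicValuation_le] at *
  rw [← mul_sub, map_mul]
  exact mul_le_of_le_one_of_le hc h

lemma mul {x' y' : ℚ} (hy : Rat.padicValuation p y ≤ 1) (hx' : Rat.padicValuation p x' ≤ 1)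
    (h : ratCong p r x y) (h' : ratCong p r x' y') : ratCong p r (x * x') (y * y') := by
  refine trans ?_ (h'.mul_left hy)
  rw [mul_comm x, mul_comm y]
  exact h.mul_left hx'

lemma of_int_modEq {a b : ℤ} (h : a ≡ b [ZMOD (p : ℤ) ^ r]) : ratCong p r a b := by
  obtain ⟨k, hk⟩ := h.symm.dvd
  exact ⟨k, mod_cast hk, by simpa using hp.out.one_lt.ne'⟩

end ratCong

lemma ratCong_mul_left_iff (hc : Rat.padicValuation p c = 1) :
    ratCong p r (c * x) (c * y) ↔ ratCong p r x y := by
  rw [ratCong_iff_padicValuation_le, ratCong_iff_padicValuation_le, ← mul_sub, map_mul, hc, one_mul]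

lemma ratCong_prime_pow_mul_iff :
    ratCong p (s + r) ((p : ℚ) ^ s * x) ((p : ℚ) ^ s * y) ↔ ratCong p r x y := by
  have hv₀ : 0 < Rat.padicValuation p p ^ s := pow_pos (zero_lt_iff.mpr
    ((Rat.padicValuation p).ne_zero_iff.mpr (Nat.cast_ne_zero.mpr hp.out.ne_zero))) s
  rw [ratCong_iff_padicValuation_le, ratCong_iff_padicValuation_le, ← mul_sub, map_mul, map_pow,
    pow_add, mul_le_mul_iff_right₀ hv₀]

end RatCong

section Bernoulli

open Polynomial hiding bernoulli

lemma coeff_comp_X_add_one_sub {R : Type*} [CommRing R] {P : R[X]} {d : ℕ}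
    (hdeg : P.natDegree ≤ d) (k : ℕ) :
    (P.comp (X + 1) - P).coeff k = (k + 1 : ℕ) * P.coeff (k + 1) +
      ∑ i ∈ Finset.range d, ((i + 2 + k).choose k : R) * P.coeff (i + 2 + k) := by
  have hdeg' : (hasseDeriv k P).natDegree < d + 2 :=
    ((natDegree_hasseDeriv_le P k).trans (Nat.sub_le _ _)).trans_lt (by lia)
  rw [← C_1, ← taylor_apply, coeff_sub, taylor_coeff, eval_eq_sum_range' hdeg',
    Finset.sum_range_succ', Finset.sum_range_succ']
  simp only [hasseDeriv_coeff, one_pow, mul_one, zero_add, add_comm 1 k, Nat.choose_self,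
    Nat.choose_succ_self_right, Nat.cast_one, one_mul, add_sub_cancel_right]
  rw [add_comm]

lemma coeff_mem_of_coeff_comp_X_add_one_sub_mem {R : Type*} [CommRing R] (J : AddSubgroup R)
    {P : R[X]} {d : ℕ} (hdeg : P.natDegree ≤ d)
    (hJ : ∀ m, 1 ≤ m → m ≤ d → ∀ x : R, m * x ∈ J → x ∈ J)
    (hdiff : ∀ k, (P.comp (X + 1) - P).coeff k ∈ J) {m : ℕ} (hm : 1 ≤ m) : P.coeff m ∈ J := by
  obtain ⟨n, hn⟩ : ∃ n, d < m + n := ⟨d + 1, by lia⟩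
  induction n generalizing m with
  | zero => exact coeff_eq_zero_of_natDegree_lt (hdeg.trans_lt hn) ▸ J.zero_mem
  | succ n ih =>
    rcases lt_or_ge d m with hdm | hmd
    · exact ih hm (by lia)
    · obtain ⟨k, rfl⟩ := Nat.exists_eq_add_of_le' hm
      refine hJ (k + 1) hm hmd _ ?_
      have htail : ∑ i ∈ Finset.range d,
          ((i + 2 + k).choose k : R) * P.coeff (i + 2 + k) ∈ J := J.sum_mem fun i _ ↦ by
        rw [← nsmul_eq_mul]
        exact J.nsmul_mem (ih (by lia) (by lia)) _
      exact (add_mem_cancel_right htail).mp (coeff_comp_X_add_one_sub hdeg k ▸ hdiff k)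

variable {p : ℕ} [hp : Fact p.Prime]

lemma padicValuation_bernoulli_le_one {n : ℕ} (hn : n + 1 < p) :
    Rat.padicValuation p (bernoulli n) ≤ 1 := by
  suffices h : Rat.padicValuation p (bernoulli' n) ≤ 1 by
    rwa [bernoulli, map_mul, map_pow, Valuation.map_neg, map_one, one_pow, one_mul]
  induction n using Nat.strong_induction_on with
  | _ n ih =>
    rw [bernoulli'_def]
    refine Valuation.map_sub_le _ (map_one _).le (Valuation.map_sum_le _ fun k hk ↦ ?_)
    rw [Finset.mem_range] at hk
    rw [show (n : ℚ) - k + 1 = (n - k + 1 : ℕ) by push_cast [hk.le]; ring, map_mul, map_div₀,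
      padicValuation_natCast_eq_one (n := n - k + 1) (by lia) (by lia), div_one]
    exact mul_le_one' (padicValuation_natCast_le_one _) (ih k hk (by lia))

lemma padicValuation_bernoulli_div_le_one {j : ℕ} (hj : j + 3 < p) :
    Rat.padicValuation p (bernoulli (p - 2 - j) / (j + 2)) ≤ 1 := by
  rw [map_div₀, show (j + 2 : ℚ) = (j + 2 : ℕ) by push_cast; rfl,
    padicValuation_natCast_eq_one (by lia) (by lia), div_one]
  exact padicValuation_bernoulli_le_one (by lia)

lemma neg_one_pow_mul_bernoulli_sub {j : ℕ} (hj : j + 3 < p) :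
    (-1) ^ (j + 1) * bernoulli (p - 2 - j) = bernoulli (p - 2 - j) := by
  have hodd := hp.out.odd_of_ne_two (by lia)
  have hparity : Even (p - 2 - j) ↔ Even (j + 1) := by grind
  rw [← neg_one_pow_congr hparity, ← bernoulli'_eq_bernoulli,
    bernoulli_eq_bernoulli'_of_ne_one (by lia)]

lemma choose_prime_sub_one_modEq {k : ℕ} (hk : k < p) :
    ((p - 1).choose k : ℤ) ≡ (-1) ^ k [ZMOD p] := by
  induction k with
  | zero => simp
  | succ k ih =>
    have hpascal : p.choose (k + 1) = (p - 1).choose k + (p - 1).choose (k + 1) := by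
      rw [← Nat.choose_succ_succ', Nat.sub_add_cancel hp.out.one_le]
    have hdvd : (p : ℤ) ∣ p.choose (k + 1) :=
      Int.natCast_dvd_natCast.mpr (hp.out.dvd_choose_self k.succ_ne_zero hk)
    rw [hpascal] at hdvd
    push_cast at hdvd
    have h := (Int.modEq_zero_iff_dvd.mpr hdvd).sub (ih (by lia))
    rwa [add_sub_cancel_left, zero_sub, ← mul_neg_one, ← pow_succ] at h

lemma natDegree_ascPochhammer_sub_bernoulli_add_le :
    (ascPochhammer ℚ p - Polynomial.bernoulli p + C (p : ℚ) * X).natDegree ≤ p - 1 := by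
  refine natDegree_le_iff_coeff_eq_zero.mpr fun N hN ↦ ?_
  have hN₁ : N ≠ 1 := by have := hp.out.two_le; lia
  rw [coeff_add, coeff_sub, coeff_C_mul, coeff_X_of_ne_one hN₁, mul_zero, add_zero, coeff_bernoulli]
  rcases (show p ≤ N by lia).eq_or_lt with rfl | hpN
  · have hlead := (monic_ascPochhammer ℚ p).coeff_natDegree
    rw [ascPochhammer_natDegree] at hlead
    simp [hlead]
  · rw [coeff_eq_zero_of_natDegree_lt (by rwa [ascPochhammer_natDegree]), if_neg hpN.not_ge,
      sub_zero]

lemma ascPochhammer_sub_bernoulli_comp_X_add_one_sub :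
    (ascPochhammer ℚ p - Polynomial.bernoulli p + C (p : ℚ) * X).comp (X + 1) -
        (ascPochhammer ℚ p - Polynomial.bernoulli p + C (p : ℚ) * X) =
      C (p : ℚ) * (risingProduct (p - 1) - (X ^ (p - 1) - 1)).map (Int.castRingHom ℚ) := by
  have hasc := ascPochhammer_succ_comp_X_add_one (S := ℚ) (p - 1)
  rw [Nat.sub_add_cancel hp.out.one_le] at hasc
  have hbern := Polynomial.bernoulli_comp_one_add_X p
  rw [add_comm] at hbern
  rw [add_comp, sub_comp, hasc, hbern]
  simp [risingProduct, map_comp]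
  ring

-- The correction `p X` cancels the constant term `-p` of the forward difference of
-- `x(x+1)⋯(x+p-1) - B_p(x)`.
lemma ratCong_coeff_ascPochhammer_bernoulli {m : ℕ} (hm : 2 ≤ m) (hmp : m ≤ p) :
    ratCong p 2 ((ascPochhammer ℤ p).coeff m : ℤ) (p.choose m * bernoulli (p - m)) := by
  set v := Rat.padicValuation p
  have hmem := coeff_mem_of_coeff_comp_X_add_one_sub_mem (v.leAddSubgroup (v p ^ 2))
    (natDegree_ascPochhammer_sub_bernoulli_add_le (p := p))
    (fun k hk hkp x hx ↦ ?_) (fun k ↦ ?_) (m := m) (by lia)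
  · rw [Valuation.mem_leAddSubgroup_iff, coeff_add, coeff_C_mul, coeff_X_of_ne_one (by lia),
      mul_zero, add_zero, coeff_sub, Polynomial.coeff_bernoulli, if_pos hmp,
      ← ascPochhammer_map (Int.castRingHom ℚ), coeff_map, mul_comm] at hmem
    exact ratCong_iff_padicValuation_le.mpr hmem
  · rw [Valuation.mem_leAddSubgroup_iff] at hx ⊢
    rwa [map_mul, padicValuation_natCast_eq_one hk (by lia), one_mul] at hx
  · rw [Valuation.mem_leAddSubgroup_iff, ascPochhammer_sub_bernoulli_comp_X_add_one_sub,
      coeff_C_mul, coeff_map, map_mul, sq]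
    refine mul_le_mul_right ?_ _
    obtain ⟨q, hq⟩ := prime_dvd_coeff_risingProduct_sub (p := p) k
    rw [eq_intCast, hq, Int.cast_mul, Int.cast_natCast, map_mul]
    exact mul_le_of_le_one_right' (Int.padicValuation_le_one p q)

lemma ratCong_coeff_risingProduct_div_bernoulli {j : ℕ} (hj : j + 3 < p) :
    ratCong p 1 ((risingProduct (p - 1)).coeff (j + 1) / p) (bernoulli (p - 2 - j) / (j + 2)) := by
  have hp₀ : (p : ℚ) ≠ 0 := Nat.cast_ne_zero.mpr hp.out.ne_zero
  have hj₀ : (j + 2 : ℚ) ≠ 0 := by positivity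
  have habsorb : (p.choose (j + 2) : ℚ) * (j + 2) = p * (p - 1).choose (j + 1) := by
    have h := Nat.add_one_mul_choose_eq (p - 1) (j + 1)
    rw [Nat.sub_add_cancel hp.out.one_le] at h
    exact_mod_cast h.symm
  have hchoose : ratCong p 1 ((p - 1).choose (j + 1)) ((-1) ^ (j + 1)) := by
    have h := choose_prime_sub_one_modEq (p := p) (k := j + 1) (by lia)
    rw [← pow_one (p : ℤ)] at h
    simpa using ratCong.of_int_modEq h
  have hmain : ratCong p (1 + 1) (p ^ 1 * ((risingProduct (p - 1)).coeff (j + 1) / p))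
      (p ^ 1 * (bernoulli (p - 2 - j) / (j + 2) * (p - 1).choose (j + 1))) := by
    convert ratCong_coeff_ascPochhammer_bernoulli (p := p) (m := j + 2) (by lia) (by lia) using 1
    · rw [coeff_risingProduct_pred hp.out.pos]; field_simp
    · rw [show p - (j + 2) = p - 2 - j by lia]
      field_simp
      linear_combination (-bernoulli (p - 2 - j)) * habsorb
  have hscaled := hchoose.mul_left (padicValuation_bernoulli_div_le_one hj)
  refine (ratCong_prime_pow_mul_iff.mp hmain).trans (hscaled.trans (.of_eq ?_))
  rw [div_mul_eq_mul_div, mul_comm (bernoulli _), neg_one_pow_mul_bernoulli_sub hj]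

end Bernoulli

section HarmonicSum

open Finset.HasAntidiagonal (antidiagonal)

lemma factorial_two_mul_eq {p : ℕ} (hp : 0 < p) :
    ((2 * p).factorial : ℤ) =
      2 * p ^ 2 * ((risingProduct (p - 1)).coeff 0 * (risingProduct (p - 1)).eval (p : ℤ)) := by
  obtain ⟨q, rfl⟩ := Nat.exists_eq_add_of_le' hp
  have hfactorial : (2 * (q + 1)).factorial =
      2 * (q + 1) ^ 2 * (q.factorial * (q + 2).ascFactorial q) := by
    rw [show 2 * (q + 1) = q + 1 + q + 1 by ring, Nat.factorial_succ,
      ← Nat.factorial_mul_ascFactorial, Nat.factorial_succ]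
    ring
  rw [Nat.add_sub_cancel, risingProduct_coeff_zero, risingProduct_eval_natCast, hfactorial]
  push_cast
  rfl

lemma mul_hsum_two_mul_eq {p : ℕ} (hp : 0 < p) (m : ℕ) :
    (p : ℚ) ^ 2 * (2 * ((risingProduct (p - 1)).coeff 0 *
        (risingProduct (p - 1)).eval (p : ℤ) : ℤ) * hsum p (m + 3) (2 * p)) =
      (m + 3).factorial * ((ascPochhammer ℤ (2 * p)).coeff (m + 3) -
        2 * (risingProduct (p - 1)).eval (p : ℤ) * (risingProduct (p - 1)).coeff (m + 1) : ℤ) := by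
  have hp₀ : (p : ℚ) ≠ 0 := Nat.cast_ne_zero.mpr hp.ne'
  have hcoeff (N k : ℕ) : (ascPochhammer ℚ N).coeff k = (ascPochhammer ℤ N).coeff k := by
    rw [← ascPochhammer_map (Int.castRingHom ℚ), Polynomial.coeff_map, eq_intCast]
  have hfactorial₂ := congrArg (Int.cast : ℤ → ℚ) (factorial_two_mul_eq hp)
  rw [Int.cast_natCast] at hfactorial₂
  have hfactorial₁ : (p.factorial : ℚ) = p * (risingProduct (p - 1)).coeff 0 := by
    rw [risingProduct_coeff_zero, ← Nat.mul_factorial_pred hp.ne']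
    push_cast
    rfl
  have hcoeff₂ := factorial_mul_coeff_reciprocalSeries_univ_pow (2 * p) (m + 3)
  have hcoeff₁ := factorial_mul_coeff_reciprocalSeries_univ_pow p (m + 2)
  rw [hcoeff, hfactorial₂, Nat.factorial_succ (m + 2)] at hcoeff₂
  rw [hcoeff, hfactorial₁, ← coeff_risingProduct_pred hp] at hcoeff₁
  rw [hsum_two_mul_eq_coeff_sub hp, Nat.factorial_succ (m + 2)]
  push_cast at hcoeff₂ ⊢
  field_simp
  linear_combination hcoeff₂ -
    2 * (((risingProduct (p - 1)).eval (p : ℤ) : ℤ) : ℚ) * (m + 3) * hcoeff₁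

variable {p : ℕ} [hp : Fact p.Prime]

lemma ratCong_sum_coeff_mul_coeff_bernoulli {w : ℕ} (hwp : w + 4 < p) :
    ratCong p 3
      (-∑ ij ∈ antidiagonal w, (-1) ^ ij.2 *
        (risingProduct (p - 1)).coeff (ij.1 + 1) * (risingProduct (p - 1)).coeff (ij.2 + 1) : ℤ)
      (p ^ 2 * ∑ ij ∈ antidiagonal w,
        bernoulli (p - 2 - ij.1) * bernoulli (p - 2 - ij.2) / ((ij.1 + 2) * (ij.2 + 2))) := by
  have hp₀ : (p : ℚ) ≠ 0 := Nat.cast_ne_zero.mpr hp.out.ne_zero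
  push_cast
  rw [← Finset.sum_neg_distrib, Finset.mul_sum]
  refine ratCong.sum fun ⟨i, j⟩ hij ↦ ?_
  have hij' : i + j = w := Finset.HasAntidiagonal.mem_antidiagonal.mp hij
  have hi := ratCong_coeff_risingProduct_div_bernoulli (p := p) (j := i) (by lia)
  have hj := ratCong_coeff_risingProduct_div_bernoulli (p := p) (j := j) (by lia)
  have hj_int : Rat.padicValuation p ((risingProduct (p - 1)).coeff (j + 1) / p) ≤ 1 := by
    obtain ⟨q, hq⟩ := prime_dvd_coeff_risingProduct (p := p) (k := j + 1) (by lia) (by lia)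
    rw [hq, Int.cast_mul, Int.cast_natCast, mul_div_cancel_left₀ _ hp₀]
    exact Int.padicValuation_le_one p q
  have hsign : Rat.padicValuation p (-(-1) ^ j) ≤ 1 := by
    rw [Valuation.map_neg, map_pow, Valuation.map_neg, map_one, one_pow]
  have hparity : (-1) ^ (j + 1) * bernoulli (p - 2 - j) = bernoulli (p - 2 - j) :=
    neg_one_pow_mul_bernoulli_sub (by lia)
  have hprod := ratCong_prime_pow_mul_iff (s := 2).mpr <|
    (ratCong.mul (padicValuation_bernoulli_div_le_one (by lia)) hj_int hi hj).mul_left hsign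
  convert hprod using 1
  · field_simp
  · rw [mul_div_mul_comm]
    nth_rw 1 [← hparity]
    ring

lemma coeff_zero_mul_eval_risingProduct_modEq_one (hp3 : 3 ≤ p) :
    (risingProduct (p - 1)).coeff 0 * (risingProduct (p - 1)).eval (p : ℤ) ≡ 1 [ZMOD p] := by
  have heval := (eval_risingProduct_modEq hp3).of_dvd (dvd_pow_self (p : ℤ) two_ne_zero)
  have hcoeff : (risingProduct (p - 1)).coeff 0 ≡ -1 [ZMOD p] := by
    have h := prime_dvd_coeff_risingProduct_sub (p := p) 0
    rw [Polynomial.coeff_sub, Polynomial.coeff_sub, Polynomial.coeff_X_pow,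
      if_neg (by lia), Polynomial.coeff_one_zero, zero_sub] at h
    exact (Int.modEq_iff_dvd.mpr h).symm
  exact hcoeff.mul (heval.trans hcoeff)

lemma padicValuation_sum_bernoulli_le_one {w : ℕ} (hwp : w + 3 < p) :
    Rat.padicValuation p (∑ ij ∈ antidiagonal w,
      bernoulli (p - 2 - ij.1) * bernoulli (p - 2 - ij.2) / ((ij.1 + 2) * (ij.2 + 2))) ≤ 1 := by
  refine Valuation.map_sum_le _ fun ⟨i, j⟩ hij ↦ ?_
  have hij' : i + j = w := Finset.HasAntidiagonal.mem_antidiagonal.mp hij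
  rw [mul_div_mul_comm, map_mul]
  exact mul_le_one' (padicValuation_bernoulli_div_le_one (by lia))
    (padicValuation_bernoulli_div_le_one (by lia))

lemma padicValuation_two_mul_coeff_zero_mul_eval_risingProduct (hp3 : 3 ≤ p) :
    Rat.padicValuation p (2 * ((risingProduct (p - 1)).coeff 0 *
      (risingProduct (p - 1)).eval (p : ℤ) : ℤ)) = 1 := by
  have htwo : Rat.padicValuation p 2 = 1 := padicValuation_natCast_eq_one two_pos hp3
  rw [map_mul, htwo, one_mul, Rat.padicValuation_cast, Int.padicValuation_eq_one_iff,
    (coeff_zero_mul_eval_risingProduct_modEq_one hp3).dvd_iff]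
  exact_mod_cast hp.out.not_dvd_one

lemma ratCong_two_mul_hsum_two_mul {w : ℕ} (hw : Even w) (hwp : w + 4 < p) :
    ratCong p 1
      (2 * ((risingProduct (p - 1)).coeff 0 * (risingProduct (p - 1)).eval (p : ℤ) : ℤ) *
        hsum p (w + 4) (2 * p))
      ((w + 4).factorial * ∑ ij ∈ antidiagonal w,
        bernoulli (p - 2 - ij.1) * bernoulli (p - 2 - ij.2) / ((ij.1 + 2) * (ij.2 + 2))) := by
  have hmod := (ratCong.of_int_modEq (coeff_ascPochhammer_two_mul_sub_modEq hw hwp)).trans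
    (ratCong_sum_coeff_mul_coeff_bernoulli hwp)
  have hscaled := hmod.mul_left (padicValuation_natCast_le_one (w + 4).factorial)
  rw [← mul_hsum_two_mul_eq hp.out.pos (w + 1), mul_left_comm _ ((p : ℚ) ^ 2)] at hscaled
  exact (ratCong_prime_pow_mul_iff (s := 2)).mp hscaled

end HarmonicSum

lemma sum_bernoulli_antidiagonal_six {p : ℕ} (hp : Odd p) (hp10 : 10 < p) :
    ∑ ij ∈ Finset.HasAntidiagonal.antidiagonal 6,
        bernoulli (p - 2 - ij.1) * bernoulli (p - 2 - ij.2) / ((ij.1 + 2) * (ij.2 + 2)) =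
      (50 * bernoulli (p - 3) * bernoulli (p - 7) + 21 * bernoulli (p - 5) ^ 2) / 525 := by
  have hvanish (i : ℕ) (hi : Even i) (hip : i < p - 3) : bernoulli (p - 2 - i) = 0 :=
    bernoulli_eq_zero_of_odd (by grind) (by lia)
  rw [Finset.Nat.sum_antidiagonal_eq_sum_range_succ_mk]
  simp only [Finset.sum_range_succ, Finset.sum_range_zero, Nat.reduceSub]
  rw [hvanish 0 (by decide) (by lia), hvanish 2 (by decide) (by lia),
    hvanish 4 (by decide) (by lia)]
  simp only [Nat.sub_sub, Nat.reduceAdd]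
  push_cast
  ring

theorem stmt_19_general (p w : ℕ) (hp : p.Prime) (hw : Even w) (hwp : w + 4 < p) :
    ratCong p 1 (hsum p (w + 4) (2 * p))
      ((w + 4).factorial / 2 * ∑ ij ∈ Finset.HasAntidiagonal.antidiagonal w,
        bernoulli (p - 2 - ij.1) * bernoulli (p - 2 - ij.2) / ((ij.1 + 2) * (ij.2 + 2))) := by
  have := Fact.mk hp
  have hp3 : 3 ≤ p := by lia
  have hone : ratCong p 1 ((risingProduct (p - 1)).coeff 0 *
      (risingProduct (p - 1)).eval (p : ℤ) : ℤ) (1 : ℤ) := .of_int_modEq <| by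
    rw [pow_one]
    exact coeff_zero_mul_eval_risingProduct_modEq_one hp3
  rw [← ratCong_mul_left_iff (padicValuation_two_mul_coeff_zero_mul_eval_risingProduct hp3)]
  refine (ratCong_two_mul_hsum_two_mul hw hwp).trans ?_
  have hsum_int := padicValuation_sum_bernoulli_le_one (show w + 3 < p by lia)
  have hscaled := ((hone.mul_left hsum_int).mul_left
    (padicValuation_natCast_le_one (w + 4).factorial)).symm
  rw [Int.cast_one, mul_one] at hscaled
  convert hscaled using 1
  ring

theorem stmt_19 (p : ℕ) (hp : p.Prime) (hp10 : 10 < p) :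
    ratCong p 1 (hsum p 10 (2 * p))
      ((Nat.factorial 10 : ℚ) / 1050 *
        (50 * bernoulli (p - 3) * bernoulli (p - 7) + 21 * bernoulli (p - 5) ^ 2)) := by
  convert stmt_19_general p 6 hp (by decide) hp10 using 1
  rw [sum_bernoulli_antidiagonal_six (hp.odd_of_ne_two (by lia)) hp10]
  ring
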